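/- Let T be an exponentially growing rank-one transformation with a bounded number of cuts. Then T is weakly rationally ergodic; in fact, for F = I the unit interval and all measurable A, B ⊆ I, one has (1/a_n(I)) ∑_{k=0}^{n−1} μ(A ∩ T^k B) → μ(A)μ(B) as n → ∞. -/

import Mathlib

open MeasureTheory Filter Set Pointwise

/-- A rank-one cutting-and-stacking transformation of a subset `X ⊆ ℝ` (with Lebesgue
measure), given by columns `C n` consisting of `h n` levels (open intervals) of width `w n`,
with `pos n j` the left endpoint of the level of height `j` in column `C n`; column `C (n+1)`
is obtained from `C n` by cutting into `r n ≥ 2` subcolumns of equal width, adding `s n k`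
spacers above the `k`-th subcolumn, and stacking. -/
structure RankOne where
  X : Set ℝ
  T : ℝ ≃ᵐ ℝ
  r : ℕ → ℕ
  s : ℕ → ℕ → ℕ
  h : ℕ → ℕ
  w : ℕ → ℝ
  pos : ℕ → ℕ → ℝ
  hr : ∀ n, 2 ≤ r n
  h0 : h 0 = 1
  w0 : w 0 = 1
  pos0 : pos 0 0 = 0
  hrec : ∀ n, h (n + 1) = ∑ k ∈ Finset.range (r n), (h n + s n k)
  wrec : ∀ n, w (n + 1) = w n / (r n : ℝ)
  hX : X = ⋃ n, ⋃ j < h n, Set.Ioo (pos n j) (pos n j + w n)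
  disj : ∀ n, ∀ j < h n, ∀ j' < h n, j ≠ j' →
    Disjoint (Set.Ioo (pos n j) (pos n j + w n)) (Set.Ioo (pos n j') (pos n j' + w n))
  stack : ∀ n, ∀ j < h n, ∀ k < r n,
    pos (n + 1) ((∑ i ∈ Finset.range k, (h n + s n i)) + j) = pos n j + (k : ℝ) * w (n + 1)
  Tmap : ∀ n j, j + 1 < h n → ∀ x ∈ Set.Ioo (pos n j) (pos n j + w n),
    T x = x + (pos n (j + 1) - pos n j)
  Tbij : Set.BijOn (⇑T) X X
  Tpres : MeasurePreserving (⇑T) (volume.restrict X) (volume.restrict X)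

namespace RankOne

/-- The level of height `j` in column `C n`. -/
def lvl (S : RankOne) (n j : ℕ) : Set ℝ := Set.Ioo (S.pos n j) (S.pos n j + S.w n)

/-- The measure on the space: Lebesgue measure restricted to `X`. -/
noncomputable def μ (S : RankOne) : Measure ℝ := volume.restrict S.X

/-- The intrinsic weight sequence `u n F = μ(F ∩ TⁿF) / μ(F)²`. -/
noncomputable def u (S : RankOne) (F : Set ℝ) (n : ℕ) : ℝ :=
  (S.μ (F ∩ (⇑S.T)^[n] '' F)).toReal / (S.μ F).toReal ^ 2

/-- `a n F = ∑_{k<n} u k F`. -/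
noncomputable def a (S : RankOne) (F : Set ℝ) (n : ℕ) : ℝ :=
  ∑ k ∈ Finset.range n, S.u F k

/-- `T` is normal if spacers are added above the rightmost subcolumn infinitely often. -/
def Normal (S : RankOne) : Prop := ∀ m, ∃ n, m ≤ n ∧ 0 < S.s n (S.r n - 1)

/-- `T` grows exponentially: `2 s_{n, r_n - 1} ≥ h_{n+1}` for every `n`. -/
def ExpGrowing (S : RankOne) : Prop := ∀ n, S.h (n + 1) ≤ 2 * S.s n (S.r n - 1)

/-- `T` has a bounded number of cuts: `sup r_n < ∞`. -/
def BoundedCuts (S : RankOne) : Prop := ∃ c, ∀ n, S.r n ≤ c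

/-- `H n = {0} ∪ {∑_{k≤i} (h n + s n k) : 0 ≤ i < r n - 1}`. -/
def Hset (S : RankOne) (n : ℕ) : Finset ℕ :=
  insert 0 ((Finset.range (S.r n - 1)).image fun i => ∑ k ∈ Finset.range (i + 1), (S.h n + S.s n k))

/-- The set of heights in column `C N` of the descendants of the level of height `p`
in column `C j`: `D(J, N) = p + H j ⊕ H (j+1) ⊕ ⋯ ⊕ H (N-1)`. -/
def desc (S : RankOne) (j p : ℕ) : ℕ → Finset ℕ
  | 0 => {p}
  | N + 1 => if N < j then {p} else desc S j p N + S.Hset N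

/-- `M m`: the maximal height of a descendant of the unit interval `I` in column `C m`. -/
def M (S : RankOne) (m : ℕ) : ℕ := (S.desc 0 0 m).sup id

/-- The ergodic sum `S_n(1_F)(x) = ∑_{k<n} 1_F(T^k x)`. -/
noncomputable def birkhoff (S : RankOne) (F : Set ℝ) (n : ℕ) (x : ℝ) : ℝ :=
  ∑ k ∈ Finset.range n, Set.indicator F (fun _ => (1 : ℝ)) ((⇑S.T)^[k] x)

/-- `T` is rationally weakly mixing on `F`. -/
def RWMOn (S : RankOne) (F : Set ℝ) : Prop :=
  MeasurableSet F ∧ 0 < S.μ F ∧ S.μ F ≠ ⊤ ∧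
  ∀ A B : Set ℝ, MeasurableSet A → A ⊆ F → MeasurableSet B → B ⊆ F →
    Tendsto (fun n => (S.a F n)⁻¹ *
      ∑ k ∈ Finset.range n,
        |(S.μ (A ∩ (⇑S.T)^[k] '' B)).toReal - (S.μ A).toReal * (S.μ B).toReal * S.u F k|)
      atTop (nhds 0)

/-- `T` is rationally weakly mixing. -/
def RWM (S : RankOne) : Prop := ∃ F, S.RWMOn F

/-- `T` is rationally ergodic: some set `F` of positive finite measure satisfies a
Renyi inequality. -/
def RatErgodic (S : RankOne) : Prop :=
  ∃ (F : Set ℝ) (c : ℝ), MeasurableSet F ∧ 0 < S.μ F ∧ S.μ F ≠ ⊤ ∧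
    ∀ n, ∫ x in F, (S.birkhoff F n x) ^ 2 ∂S.μ ≤ c * (∫ x in F, S.birkhoff F n x ∂S.μ) ^ 2

/-- `T` is spectrally weakly mixing: every bounded measurable eigenfunction is a.e. constant. -/
def SpecWM (S : RankOne) : Prop :=
  ∀ (f : ℝ → ℂ) (z : ℂ), Measurable f → (∃ C, ∀ᵐ x ∂S.μ, ‖f x‖ ≤ C) →
    (∀ᵐ x ∂S.μ, f (S.T x) = z * f x) → ∃ c : ℂ, ∀ᵐ x ∂S.μ, f x = c

/-- `T` is zero-type: `μ(A ∩ TⁿA) → 0` for all `A` of finite measure. -/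
def ZeroType (S : RankOne) : Prop :=
  ∀ A : Set ℝ, MeasurableSet A → S.μ A ≠ ⊤ →
    Tendsto (fun n => S.μ (A ∩ (⇑S.T)^[n] '' A)) atTop (nhds 0)

/-- The `i`-th nonzero element of `H n` (for `i < r n - 1`): `e n i = ∑_{k ≤ i} (h n + s n k)`. -/
def e (S : RankOne) (n i : ℕ) : ℕ := ∑ k ∈ Finset.range (i + 1), (S.h n + S.s n k)

/-- `T` is steep: listing the nonzero elements of `H 0`, then `H 1`, etc., as `t 1, t 2, …`,
each successive element is at least `4` times the previous one. -/
def Steep (S : RankOne) : Prop :=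
  (∀ n i, i + 2 < S.r n → 4 * S.e n i ≤ S.e n (i + 1)) ∧
  (∀ n, 4 * S.e n (S.r n - 2) ≤ S.e (n + 1) 0)

/-- `T` is almost steep. -/
def AlmostSteep (S : RankOne) : Prop :=
  ∀ n, 3 ≤ S.r n ∧ S.s n 0 = 0 ∧ S.s n 1 = 1 ∧
    ∀ i, 2 ≤ i → i ≤ S.r n - 1 →
      4 * (∑ k ∈ Finset.range i, (S.h n + S.s n k)) ≤ ∑ k ∈ Finset.range (i + 1), (S.h n + S.s n k)

/-- `A` is a finite union of levels of `T`. -/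
def FinUnionLevels (S : RankOne) (A : Set ℝ) : Prop :=
  ∃ q : Finset (ℕ × ℕ), (∀ v ∈ q, v.2 < S.h v.1) ∧ A = ⋃ v ∈ q, S.lvl v.1 v.2

end RankOne


namespace RankOne

/-- The number of pieces of the unit interval at stage `N`. -/
def R (S : RankOne) : ℕ → ℕ
  | 0 => 1
  | N + 1 => R S N * S.r N

/-- Height of the bottom of the `k`-th subcolumn of `C N` inside `C (N+1)`. -/
def off (S : RankOne) (N k : ℕ) : ℕ := ∑ i ∈ Finset.range k, (S.h N + S.s N i)

/-- Height in `C N` of the `i`-th piece of the unit interval. -/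
def dd (S : RankOne) : ℕ → ℕ → ℕ
  | 0, _ => 0
  | N + 1, i => S.off N (i % S.r N) + dd S N (i / S.r N)

/-- The unit interval. -/
def I01 : Set ℝ := Set.Ioo 0 1

/-- The `i`-th piece of the unit interval at stage `N`. -/
def J (S : RankOne) (N i : ℕ) : Set ℝ := S.lvl N (S.dd N i)

/-- `μ (A ∩ T^k B)` in preimage form. -/
noncomputable def P (S : RankOne) (k : ℕ) (A B : Set ℝ) : ℝ :=
  S.μ.real (A ∩ (⇑S.T.symm)^[k] ⁻¹' B)

/-- Partial sums of `P`. -/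
noncomputable def sm (S : RankOne) (n : ℕ) (A B : Set ℝ) : ℝ :=
  ∑ k ∈ Finset.range n, S.P k A B

lemma r_pos (S : RankOne) (n : ℕ) : 0 < S.r n := by have := S.hr n; omega

lemma R_pos (S : RankOne) (N : ℕ) : 0 < S.R N := by
  induction N with
  | zero => simp [R]
  | succ N ih => simp only [R]; exact Nat.mul_pos ih (S.r_pos N)

lemma two_pow_le_R (S : RankOne) (N : ℕ) : 2 ^ N ≤ S.R N := by
  induction N with
  | zero => simp [R]
  | succ N ih => simp only [R, pow_succ]; exact Nat.mul_le_mul ih (S.hr N)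

lemma w_eq (S : RankOne) (N : ℕ) : S.w N = 1 / (S.R N : ℝ) := by
  induction N with
  | zero => simp [R, S.w0]
  | succ N ih =>
    rw [S.wrec, ih]; simp only [R]; push_cast; rw [div_div]

lemma w_pos (S : RankOne) (N : ℕ) : 0 < S.w N := by
  rw [w_eq]; have := S.R_pos N; positivity

lemma R_mul_w (S : RankOne) (N : ℕ) : (S.R N : ℝ) * S.w N = 1 := by
  have : (0 : ℝ) < S.R N := by exact_mod_cast S.R_pos N
  rw [w_eq]; field_simp

lemma div_lt_R (S : RankOne) {N i : ℕ} (hi : i < S.R (N + 1)) : i / S.r N < S.R N := by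
  rw [Nat.div_lt_iff_lt_mul (S.r_pos N)]; simpa [R] using hi

lemma off_succ (S : RankOne) (N k : ℕ) : S.off N (k + 1) = S.off N k + (S.h N + S.s N k) := by
  simp [off, Finset.sum_range_succ]

lemma off_mono (S : RankOne) (N : ℕ) : Monotone (S.off N) :=
  monotone_nat_of_le_succ fun k => by rw [off_succ]; omega

lemma h_succ (S : RankOne) (N : ℕ) :
    S.h (N + 1) = S.off N (S.r N - 1) + (S.h N + S.s N (S.r N - 1)) := by
  rw [← off_succ, Nat.sub_add_cancel (S.r_pos N), S.hrec]; rfl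

lemma h_pos (S : RankOne) (N : ℕ) : 0 < S.h N := by
  induction N with
  | zero => simp [S.h0]
  | succ N ih => rw [h_succ]; omega

lemma two_h_le (S : RankOne) (N : ℕ) : 2 * S.h N ≤ S.h (N + 1) := by
  have h1 : S.off N 1 ≤ S.off N (S.r N - 1) := S.off_mono N (by have := S.hr N; omega)
  have h2 : S.off N 1 = S.h N + S.s N 0 := by simp [off]
  rw [h_succ]; omega

lemma lt_h (S : RankOne) (N : ℕ) : N < S.h N := by
  induction N with
  | zero => exact S.h_pos 0
  | succ N ih => have := S.two_h_le N; omega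

lemma dd_lt (S : RankOne) (N i : ℕ) : S.dd N i < S.h N := by
  induction N generalizing i with
  | zero => simp [dd, S.h0]
  | succ N ih =>
    have h1 : S.off N (i % S.r N) ≤ S.off N (S.r N - 1) :=
      S.off_mono N (by have := Nat.mod_lt i (S.r_pos N); omega)
    have := ih (i / S.r N)
    rw [h_succ]; simp only [dd]; omega

lemma two_dd_lt (S : RankOne) (hexp : S.ExpGrowing) (N i : ℕ) : 2 * S.dd N i < S.h N := by
  cases N with
  | zero => simp [dd, S.h0]
  | succ N =>
    have h1 : S.off N (i % S.r N) ≤ S.off N (S.r N - 1) :=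
      S.off_mono N (by have := Nat.mod_lt i (S.r_pos N); omega)
    have := S.dd_lt N (i / S.r N)
    have h2 := hexp N
    have h3 := S.h_succ N
    simp only [dd]; omega

lemma pos_dd (S : RankOne) (N i : ℕ) (hi : i < S.R N) :
    S.pos N (S.dd N i) = i * S.w N := by
  induction N generalizing i with
  | zero =>
    have : i = 0 := by simpa [R] using hi
    subst this; simp [dd, S.pos0]
  | succ N ih =>
    have hr : (S.r N : ℝ) ≠ 0 := by exact_mod_cast (S.r_pos N).ne'
    have h1 := S.stack N (S.dd N (i / S.r N)) (S.dd_lt _ _) (i % S.r N) (Nat.mod_lt _ (S.r_pos N))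
    simp only [dd, off]
    rw [h1, ih _ (S.div_lt_R hi)]
    have h2 : S.w N = S.r N * S.w (N + 1) := by rw [S.wrec]; field_simp
    have h3 : (i : ℝ) = (S.r N : ℝ) * ((i / S.r N : ℕ) : ℝ) + ((i % S.r N : ℕ) : ℝ) := by
      exact_mod_cast (Nat.div_add_mod i (S.r N)).symm
    rw [h2, h3]; ring

lemma J_eq (S : RankOne) (N i : ℕ) (hi : i < S.R N) :
    S.J N i = Set.Ioo (i * S.w N) ((i + 1) * S.w N) := by
  simp only [J, lvl, S.pos_dd N i hi]; congr 1; ring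

lemma J_sub (S : RankOne) (N i : ℕ) (hi : i < S.R N) : S.J N i ⊆ I01 := by
  rw [J_eq S N i hi]
  intro x hx
  have hw := S.w_pos N
  have h1 : ((i : ℝ) + 1) * S.w N ≤ S.R N * S.w N := by
    gcongr; exact_mod_cast hi
  rw [R_mul_w] at h1
  exact ⟨lt_of_le_of_lt (by positivity) hx.1, hx.2.trans_le h1⟩

lemma lvl00 (S : RankOne) : S.lvl 0 0 = I01 := by simp [lvl, I01, S.pos0, S.w0]

lemma measurableSet_I : MeasurableSet I01 := measurableSet_Ioo

lemma measurableSet_J (S : RankOne) (N i : ℕ) : MeasurableSet (S.J N i) := measurableSet_Ioo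

lemma measurableSet_X (S : RankOne) : MeasurableSet S.X := by
  rw [S.hX]
  exact MeasurableSet.iUnion fun n => MeasurableSet.iUnion fun j => MeasurableSet.iUnion fun _ =>
    measurableSet_Ioo

lemma I_sub_X (S : RankOne) : I01 ⊆ S.X := by
  rw [← S.lvl00, S.hX]
  intro x hx
  simp only [Set.mem_iUnion]
  exact ⟨0, 0, by simp [S.h0], hx⟩

lemma mu_eq (S : RankOne) {E : Set ℝ} (hE : E ⊆ I01) : S.μ E = volume E := by
  rw [μ, Measure.restrict_apply' S.measurableSet_X,
    Set.inter_eq_left.2 (hE.trans S.I_sub_X)]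

lemma vol_I : volume I01 = 1 := by simp [I01]

lemma mu_le_one (S : RankOne) {E : Set ℝ} (hE : E ⊆ I01) : S.μ E ≤ 1 := by
  rw [mu_eq S hE, ← vol_I]; exact measure_mono hE

lemma mureal_eq (S : RankOne) {E : Set ℝ} (hE : E ⊆ I01) : S.μ.real E = volume.real E := by
  simp [Measure.real, mu_eq S hE]

lemma mp (S : RankOne) : MeasurePreserving (⇑S.T.symm) S.μ S.μ :=
  MeasurePreserving.symm S.T S.Tpres

lemma mpk (S : RankOne) (k : ℕ) : MeasurePreserving ((⇑S.T.symm)^[k]) S.μ S.μ := S.mp.iterate k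

lemma mpTk (S : RankOne) (k : ℕ) : MeasurePreserving ((⇑S.T)^[k]) S.μ S.μ :=
  MeasurePreserving.iterate S.Tpres k

lemma li (S : RankOne) (k : ℕ) : Function.LeftInverse ((⇑S.T.symm)^[k]) ((⇑S.T)^[k]) :=
  Function.LeftInverse.iterate S.T.symm_apply_apply k

lemma ri (S : RankOne) (k : ℕ) : Function.LeftInverse ((⇑S.T)^[k]) ((⇑S.T.symm)^[k]) :=
  Function.LeftInverse.iterate S.T.apply_symm_apply k

lemma image_eq (S : RankOne) (k : ℕ) (B : Set ℝ) :
    (⇑S.T)^[k] '' B = (⇑S.T.symm)^[k] ⁻¹' B :=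
  congrFun (Set.image_eq_preimage_of_inverse (S.li k) (S.ri k)) B

lemma iter_eq (S : RankOne) (N j k : ℕ) (hk : j + k < S.h N) (x : ℝ) (hx : x ∈ S.lvl N j) :
    (⇑S.T)^[k] x = x + (S.pos N (j + k) - S.pos N j) := by
  induction k with
  | zero => simp
  | succ k ih =>
    rw [Function.iterate_succ_apply', ih (by omega), S.Tmap N (j + k) (by omega)]
    · rw [← add_assoc j k 1]; ring
    · simp only [lvl, Set.mem_Ioo] at hx ⊢
      constructor <;> linarith [hx.1, hx.2]

lemma pre_lvl (S : RankOne) (N j k : ℕ) (hk : j + k < S.h N) :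
    (⇑S.T.symm)^[k] ⁻¹' S.lvl N j = S.lvl N (j + k) := by
  rw [← image_eq]
  ext x
  constructor
  · rintro ⟨y, hy, rfl⟩
    rw [S.iter_eq N j k hk y hy]
    simp only [lvl, Set.mem_Ioo] at hy ⊢
    constructor <;> linarith [hy.1, hy.2]
  · intro hx
    have hy : x - (S.pos N (j + k) - S.pos N j) ∈ S.lvl N j := by
      simp only [lvl, Set.mem_Ioo] at hx ⊢
      constructor <;> linarith [hx.1, hx.2]
    exact ⟨_, hy, by rw [S.iter_eq N j k hk _ hy]; ring⟩

/-- No early returns. -/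
lemma no_return (S : RankOne) (hexp : S.ExpGrowing) (N i m : ℕ) (hm : 0 < m)
    (hm2 : 2 * m ≤ S.h N) (y : ℝ) (hy : y ∈ S.J N i) : (⇑S.T)^[m] y ∉ S.J N i := by
  have hlt : S.dd N i + m < S.h N := by have := S.two_dd_lt hexp N i; omega
  have h1 : (⇑S.T)^[m] y ∈ S.lvl N (S.dd N i + m) := by
    rw [← S.pre_lvl N _ m hlt, ← image_eq]; exact ⟨y, hy, rfl⟩
  intro h2
  exact Set.disjoint_left.1 (S.disj N _ (S.dd_lt N i) _ hlt (by omega)) h2 h1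

lemma J_disj (S : RankOne) (N i j : ℕ) (hi : i < S.R N) (hj : j < S.R N) (hij : i ≠ j) :
    Disjoint (S.J N i) (S.J N j) := by
  refine S.disj N _ (S.dd_lt N i) _ (S.dd_lt N j) fun h => hij ?_
  have h1 := S.pos_dd N i hi
  rw [h, S.pos_dd N j hj] at h1
  have := mul_right_cancel₀ (S.w_pos N).ne' h1
  exact_mod_cast this.symm

lemma vol_J (S : RankOne) (N i : ℕ) : volume.real (S.J N i) = S.w N := by
  simp [J, lvl, (S.w_pos N).le]

lemma vol_biUnion_J (S : RankOne) (N : ℕ) (s : Finset ℕ) (hs : ∀ i ∈ s, i < S.R N) :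
    volume.real (⋃ i ∈ s, S.J N i) = s.card * S.w N := by
  rw [measureReal_biUnion_finset (h := fun i _ => by simp [J, lvl])]
  · simp [vol_J]
  · intro i hi j hj hij
    exact S.J_disj N i j (hs i (by simpa using hi)) (hs j (by simpa using hj)) hij
  · intro i _; exact S.measurableSet_J N i

lemma vol_iUnion_J (S : RankOne) (N p : ℕ) (hp : p ≤ S.R N) :
    volume.real (⋃ i ∈ Finset.range p, S.J N i) = p * S.w N := by
  rw [S.vol_biUnion_J N _ fun i hi => by have := Finset.mem_range.1 hi; omega, Finset.card_range]

/-- Any measure absolutely continuous to Lebesgue on the unit interval splits over the `J`. -/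
lemma split (S : RankOne) (m : Measure ℝ) (hac : ∀ E ⊆ I01, volume E = 0 → m E = 0)
    (E : Set ℝ) (hEI : E ⊆ I01) (hfin : m E ≠ ⊤) (N : ℕ) (s : Finset ℕ)
    (hs : ∀ i ∈ s, i < S.R N)
    (hsE : ∀ i ∈ s, S.J N i ⊆ E) (hvol : volume.real E = s.card * S.w N) :
    m.real E = ∑ i ∈ s, m.real (S.J N i) := by
  have hsub : (⋃ i ∈ s, S.J N i) ⊆ E := Set.iUnion₂_subset hsE
  have hvE : volume E ≠ ⊤ := ne_top_of_le_ne_top (by simp [vol_I]) (measure_mono hEI)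
  have hmeas : MeasurableSet (⋃ i ∈ s, S.J N i) :=
    Finset.measurableSet_biUnion _ fun i _ => S.measurableSet_J N i
  have h0 : volume (E \ ⋃ i ∈ s, S.J N i) = 0 := by
    have : volume.real (E \ ⋃ i ∈ s, S.J N i) = 0 := by
      rw [measureReal_sdiff (μ := volume) hsub hmeas hvE,
        vol_biUnion_J S N s hs, hvol, sub_self]
    rwa [measureReal_eq_zero_iff (ne_top_of_le_ne_top hvE
      (measure_mono Set.sdiff_subset))] at this
  have h1 := hac _ (Set.sdiff_subset.trans hEI) h0
  have h2 : m E = m (⋃ i ∈ s, S.J N i) := by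
    refine le_antisymm ?_ (measure_mono hsub)
    have := measure_le_inter_add_sdiff m E (⋃ i ∈ s, S.J N i)
    rw [h1, add_zero] at this
    exact this.trans (measure_mono Set.inter_subset_right)
  rw [Measure.real, h2]
  change m.real _ = _
  rw [measureReal_biUnion_finset (h := fun i hi =>
    ne_top_of_le_ne_top hfin (measure_mono (hsE i hi)))]
  · intro i hi j hj hij
    exact S.J_disj N i j (hs i (by simpa using hi)) (hs j (by simpa using hj)) hij
  · intro i _; exact S.measurableSet_J N i

lemma I_vol (S : RankOne) (N : ℕ) :
    volume.real I01 = (Finset.range (S.R N)).card * S.w N := by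
  rw [Finset.card_range, R_mul_w]; simp [Measure.real, vol_I]

end RankOne
namespace RankOne

lemma P_nonneg (S : RankOne) (k : ℕ) (A B : Set ℝ) : 0 ≤ S.P k A B := measureReal_nonneg

lemma sm_nonneg (S : RankOne) (n : ℕ) (A B : Set ℝ) : 0 ≤ S.sm n A B :=
  Finset.sum_nonneg fun _ _ => S.P_nonneg _ _ _

lemma P_le (S : RankOne) (k : ℕ) (A B : Set ℝ) (hA : S.μ A ≤ 1) : S.P k A B ≤ 1 := by
  unfold P Measure.real
  refine ENNReal.toReal_le_of_le_ofReal zero_le_one ?_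
  simpa using (measure_mono Set.inter_subset_left).trans hA

lemma P_succ_left (S : RankOne) (k : ℕ) (A B : Set ℝ) (hA : MeasurableSet A)
    (hB : MeasurableSet B) : S.P (k + 1) (⇑S.T.symm ⁻¹' A) B = S.P k A B := by
  unfold P
  rw [Function.iterate_succ, Set.preimage_comp, ← Set.preimage_inter, Measure.real,
    S.mp.measure_preimage (hA.inter ((S.mpk k).measurable hB)).nullMeasurableSet]
  rfl

lemma P_succ_right (S : RankOne) (k : ℕ) (A B : Set ℝ) :
    S.P k A (⇑S.T.symm ⁻¹' B) = S.P (k + 1) A B := by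
  unfold P
  rw [Function.iterate_succ', Set.preimage_comp]

lemma mu_pre (S : RankOne) (A : Set ℝ) (hA : MeasurableSet A) (k : ℕ) :
    S.μ ((⇑S.T.symm)^[k] ⁻¹' A) = S.μ A :=
  (S.mpk k).measure_preimage hA.nullMeasurableSet

lemma shift_left (S : RankOne) (n : ℕ) (A B : Set ℝ) (hA : MeasurableSet A)
    (hB : MeasurableSet B) (hA1 : S.μ A ≤ 1) :
    |S.sm n (⇑S.T.symm ⁻¹' A) B - S.sm n A B| ≤ 1 := by
  cases n with
  | zero => simp [sm]
  | succ m =>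
    unfold sm
    rw [Finset.sum_range_succ', Finset.sum_range_succ (fun k => S.P k A B)]
    simp only [S.P_succ_left _ A B hA hB]
    have h1 := S.P_nonneg 0 (⇑S.T.symm ⁻¹' A) B
    have h2 := S.P_le 0 (⇑S.T.symm ⁻¹' A) B (by
      have := S.mu_pre A hA 1; simp only [Function.iterate_one] at this; rwa [this])
    have h3 := S.P_nonneg m A B
    have h4 := S.P_le m A B hA1
    rw [abs_le]; constructor <;> linarith

lemma shift_right (S : RankOne) (n : ℕ) (A B : Set ℝ) (hA1 : S.μ A ≤ 1) :
    |S.sm n A (⇑S.T.symm ⁻¹' B) - S.sm n A B| ≤ 1 := by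
  unfold sm
  simp only [S.P_succ_right _ A B]
  have h0 := Finset.sum_range_succ' (fun k => S.P k A B) n
  rw [Finset.sum_range_succ] at h0
  have h1 := S.P_nonneg 0 A B
  have h2 := S.P_le 0 A B hA1
  have h3 := S.P_nonneg n A B
  have h4 := S.P_le n A B hA1
  rw [abs_le]; constructor <;> linarith

lemma shift_both (S : RankOne) (n p q : ℕ) (A B : Set ℝ) (hA : MeasurableSet A)
    (hB : MeasurableSet B) (hA1 : S.μ A ≤ 1) :
    |S.sm n ((⇑S.T.symm)^[p] ⁻¹' A) ((⇑S.T.symm)^[q] ⁻¹' B) - S.sm n A B| ≤ p + q := by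
  have h1 : |S.sm n ((⇑S.T.symm)^[p] ⁻¹' A) ((⇑S.T.symm)^[q] ⁻¹' B)
      - S.sm n A ((⇑S.T.symm)^[q] ⁻¹' B)| ≤ p := by
    induction p with
    | zero => simp
    | succ p ih =>
      have := S.shift_left n ((⇑S.T.symm)^[p] ⁻¹' A) ((⇑S.T.symm)^[q] ⁻¹' B)
        ((S.mpk p).measurable hA) ((S.mpk q).measurable hB) (by rwa [S.mu_pre A hA])
      rw [Function.iterate_succ, Set.preimage_comp]
      push_cast
      rw [abs_le] at *; constructor <;> linarith [this.1, this.2, ih.1, ih.2]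
  have h2 : |S.sm n A ((⇑S.T.symm)^[q] ⁻¹' B) - S.sm n A B| ≤ q := by
    induction q with
    | zero => simp
    | succ q ih =>
      have := S.shift_right n A ((⇑S.T.symm)^[q] ⁻¹' B) hA1
      have ih := ih (by
        clear ih h1 this
        induction p with
        | zero => simp
        | succ p ih =>
          have := S.shift_left n ((⇑S.T.symm)^[p] ⁻¹' A) ((⇑S.T.symm)^[q] ⁻¹' B)
            ((S.mpk p).measurable hA) ((S.mpk q).measurable hB) (by rwa [S.mu_pre A hA])
          rw [Function.iterate_succ, Set.preimage_comp]
          push_cast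
          rw [abs_le] at *; constructor <;> linarith [this.1, this.2, ih.1, ih.2])
      rw [Function.iterate_succ, Set.preimage_comp]
      push_cast
      rw [abs_le] at *; constructor <;> linarith [this.1, this.2, ih.1, ih.2]
  rw [abs_le] at *; constructor <;> linarith [h1.1, h1.2, h2.1, h2.2]

lemma J_pre (S : RankOne) (N i : ℕ) :
    S.J N i = (⇑S.T.symm)^[S.dd N i] ⁻¹' (S.lvl N 0) := by
  rw [S.pre_lvl N 0 _ (by simpa using S.dd_lt N i), zero_add]; rfl

lemma mu_lvl0 (S : RankOne) (N : ℕ) : S.μ (S.lvl N 0) ≤ 1 := by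
  have h := S.J_pre N 0
  rw [← S.mu_pre (S.lvl N 0) measurableSet_Ioo (S.dd N 0)]
  have := S.mu_le_one (S.J_sub N 0 (S.R_pos N))
  rwa [h] at this

lemma sm_J (S : RankOne) (n N i j : ℕ) :
    |S.sm n (S.J N i) (S.J N j) - S.sm n (S.lvl N 0) (S.lvl N 0)| ≤ 2 * S.h N := by
  rw [S.J_pre N i, S.J_pre N j]
  refine (S.shift_both n _ _ _ _ measurableSet_Ioo measurableSet_Ioo (S.mu_lvl0 N)).trans ?_
  have h1 : (S.dd N i : ℝ) ≤ S.h N := by exact_mod_cast (S.dd_lt N i).le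
  have h2 : (S.dd N j : ℝ) ≤ S.h N := by exact_mod_cast (S.dd_lt N j).le
  linarith

lemma P_split_left (S : RankOne) (k N : ℕ) (B : Set ℝ) :
    S.P k I01 B = ∑ i ∈ Finset.range (S.R N), S.P k (S.J N i) B := by
  have h := S.split (S.μ.restrict ((⇑S.T.symm)^[k] ⁻¹' B)) (fun E hE h0 => by
      have h1 : S.μ E = 0 := by rw [S.mu_eq hE, h0]
      exact le_antisymm ((Measure.restrict_apply_le _ _).trans h1.le) bot_le) I01 le_rfl
    (ne_top_of_le_ne_top ENNReal.one_ne_top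
      ((Measure.restrict_apply_le _ _).trans (S.mu_le_one le_rfl))) N (Finset.range (S.R N))
    (by simp) (fun i hi => S.J_sub N i (by simpa using hi)) (S.I_vol N)
  rw [measureReal_restrict_apply measurableSet_I] at h
  unfold P
  rw [h]
  exact Finset.sum_congr rfl fun i _ => measureReal_restrict_apply (S.measurableSet_J N i)

lemma P_split_gen (S : RankOne) (k N : ℕ) (A : Set ℝ) (hA : S.μ A ≤ 1)
    (E : Set ℝ) (hE : MeasurableSet E) (hEI : E ⊆ I01) (s : Finset ℕ)
    (hs : ∀ i ∈ s, i < S.R N)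
    (hsE : ∀ i ∈ s, S.J N i ⊆ E) (hvol : volume.real E = s.card * S.w N) :
    S.P k A E = ∑ i ∈ s, S.P k A (S.J N i) := by
  have key : ∀ E, MeasurableSet E →
      ((S.μ.restrict A).map ((⇑S.T.symm)^[k])) E = S.μ (A ∩ (⇑S.T.symm)^[k] ⁻¹' E) := by
    intro E hE
    rw [Measure.map_apply (S.mpk k).measurable hE,
      Measure.restrict_apply ((S.mpk k).measurable hE), Set.inter_comm]
  have h := S.split ((S.μ.restrict A).map ((⇑S.T.symm)^[k])) (fun E hE h0 => by
      have h1 : S.μ E = 0 := by rw [S.mu_eq hE, h0]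
      have h2 : (S.μ.restrict A).map ((⇑S.T.symm)^[k]) ≤ S.μ := by
        conv_rhs => rw [← (S.mpk k).map_eq]
        exact Measure.map_mono Measure.restrict_le_self (S.mpk k).measurable
      exact le_antisymm ((h2 E).trans h1.le) bot_le) E hEI
    (by rw [key _ hE]; exact ne_top_of_le_ne_top ENNReal.one_ne_top
          ((measure_mono Set.inter_subset_left).trans hA)) N s hs hsE hvol
  unfold P
  simp only [Measure.real] at h ⊢
  rw [← key _ hE, h]
  exact Finset.sum_congr rfl fun i _ => by rw [key _ (S.measurableSet_J N i)]

lemma P_split_right (S : RankOne) (k N : ℕ) (A : Set ℝ) (hA : S.μ A ≤ 1) :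
    S.P k A I01 = ∑ i ∈ Finset.range (S.R N), S.P k A (S.J N i) :=
  S.P_split_gen k N A hA I01 measurableSet_I le_rfl _ (by simp)
    (fun i hi => S.J_sub N i (by simpa using hi)) (S.I_vol N)

lemma sm_refine (S : RankOne) (n N j : ℕ) (hj : j < S.R N) (A : Set ℝ) (hA : S.μ A ≤ 1) :
    S.sm n A (S.J N j) =
      ∑ k ∈ Finset.range (S.r N), S.sm n A (S.J (N + 1) (j * S.r N + k)) := by
  have hlt : ∀ k < S.r N, j * S.r N + k < S.R (N + 1) := by
    intro k hk
    have : (j + 1) * S.r N ≤ S.R N * S.r N := Nat.mul_le_mul_right _ hj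
    simp only [R]; linarith
  have hr : (S.r N : ℝ) ≠ 0 := by exact_mod_cast (S.r_pos N).ne'
  have hw : S.w N = S.r N * S.w (N + 1) := by rw [S.wrec]; field_simp
  have hw1 := S.w_pos (N + 1)
  unfold sm
  rw [Finset.sum_comm]
  refine Finset.sum_congr rfl fun l _ => ?_
  rw [S.P_split_gen l (N + 1) A hA (S.J N j) (S.measurableSet_J N j) (S.J_sub N j hj)
    ((Finset.range (S.r N)).image fun k => j * S.r N + k)]
  · rw [Finset.sum_image (fun a _ b _ h => by simpa using h)]
  · intro i hi
    obtain ⟨k, hk, rfl⟩ := Finset.mem_image.1 hi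
    exact hlt k (by simpa using hk)
  · intro i hi
    obtain ⟨k, hk, rfl⟩ := Finset.mem_image.1 hi
    have hk : k < S.r N := by simpa using hk
    rw [S.J_eq _ _ (hlt k hk), S.J_eq N j hj, hw]
    have hk' : (k : ℝ) + 1 ≤ S.r N := by exact_mod_cast hk
    push_cast
    apply Set.Ioo_subset_Ioo
    · nlinarith [mul_nonneg (Nat.cast_nonneg (α := ℝ) k) hw1.le]
    · nlinarith
  · rw [S.vol_J, Finset.card_image_of_injective _ (fun a b h => by simpa using h),
      Finset.card_range, hw]

lemma sm_split_left (S : RankOne) (n N : ℕ) (B : Set ℝ) :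
    S.sm n I01 B = ∑ i ∈ Finset.range (S.R N), S.sm n (S.J N i) B := by
  unfold sm
  rw [Finset.sum_comm]
  exact Finset.sum_congr rfl fun k _ => S.P_split_left k N B

lemma sm_split_right (S : RankOne) (n N : ℕ) (A : Set ℝ) (hA : S.μ A ≤ 1) :
    S.sm n A I01 = ∑ i ∈ Finset.range (S.R N), S.sm n A (S.J N i) := by
  unfold sm
  rw [Finset.sum_comm]
  exact Finset.sum_congr rfl fun k _ => S.P_split_right k N A hA

lemma sm_split (S : RankOne) (n N : ℕ) :
    S.sm n I01 I01 =
      ∑ i ∈ Finset.range (S.R N), ∑ j ∈ Finset.range (S.R N), S.sm n (S.J N i) (S.J N j) := by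
  rw [S.sm_split_left n N]
  exact Finset.sum_congr rfl fun i hi =>
    S.sm_split_right n N _ (S.mu_le_one (S.J_sub N i (by simpa using hi)))

lemma upper_left (S : RankOne) (hexp : S.ExpGrowing) (n N : ℕ) (hn : 2 * n ≤ S.h N)
    (E : Set ℝ) (hE : MeasurableSet E) (hEI : E ⊆ I01) :
    S.sm n E I01 ≤ S.R N * S.μ.real E := by
  have hfin : ∀ E' ⊆ E, S.μ E' ≠ ⊤ := fun E' h' =>
    ne_top_of_le_ne_top ENNReal.one_ne_top (S.mu_le_one (h'.trans hEI))
  rw [S.sm_split_right n N E (S.mu_le_one hEI)]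
  have : ∀ j ∈ Finset.range (S.R N), S.sm n E (S.J N j) ≤ S.μ.real E := by
    intro j _
    unfold sm P
    rw [← measureReal_biUnion_finset (h := fun k _ => hfin _ Set.inter_subset_left)]
    · exact measureReal_mono (Set.iUnion₂_subset fun _ _ => Set.inter_subset_left) (hfin _ le_rfl)
    · have main : ∀ k l, k < l → l < n → Disjoint (E ∩ (⇑S.T.symm)^[k] ⁻¹' S.J N j)
          (E ∩ (⇑S.T.symm)^[l] ⁻¹' S.J N j) := by
        intro k l hkl hl
        rw [Set.disjoint_left]
        rintro x ⟨_, hx1⟩ ⟨_, hx2⟩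
        obtain ⟨m, rfl⟩ := Nat.exists_eq_add_of_lt hkl
        refine S.no_return hexp N j (m + 1) (by omega) (by omega) _ hx2 ?_
        have : (⇑S.T)^[m + 1] ((⇑S.T.symm)^[k + m + 1] x) = (⇑S.T.symm)^[k] x := by
          rw [show k + m + 1 = (m + 1) + k by ring, Function.iterate_add_apply (⇑S.T.symm) (m + 1) k, S.ri (m + 1)]
        rw [this]; exact hx1
      intro k hk l hl hkl
      have hk : k < n := by simpa using hk
      have hl : l < n := by simpa using hl
      rcases lt_or_gt_of_ne hkl with h | h
      · exact main k l h hl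
      · exact (main l k h hk).symm
    · intro k _; exact hE.inter ((S.mpk k).measurable (S.measurableSet_J N j))
  simpa using Finset.sum_le_sum this

lemma P_eq_T (S : RankOne) (k : ℕ) (A B : Set ℝ) (hA : MeasurableSet A) (hB : MeasurableSet B) :
    S.P k A B = S.μ.real ((⇑S.T)^[k] ⁻¹' A ∩ B) := by
  unfold P Measure.real
  rw [← (S.mpTk k).measure_preimage (hA.inter ((S.mpk k).measurable hB)).nullMeasurableSet,
    Set.preimage_inter, ← Set.preimage_comp, (S.li k).comp_eq_id, Set.preimage_id]

lemma upper_right (S : RankOne) (hexp : S.ExpGrowing) (n N : ℕ) (hn : 2 * n ≤ S.h N)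
    (E : Set ℝ) (hE : MeasurableSet E) (hEI : E ⊆ I01) :
    S.sm n I01 E ≤ S.R N * S.μ.real E := by
  have hfin : ∀ E' ⊆ E, S.μ E' ≠ ⊤ := fun E' h' =>
    ne_top_of_le_ne_top ENNReal.one_ne_top (S.mu_le_one (h'.trans hEI))
  rw [S.sm_split_left n N E]
  have : ∀ j ∈ Finset.range (S.R N), S.sm n (S.J N j) E ≤ S.μ.real E := by
    intro j _
    unfold sm
    simp only [S.P_eq_T _ _ _ (S.measurableSet_J N j) hE]
    rw [← measureReal_biUnion_finset (h := fun k _ => hfin _ Set.inter_subset_right)]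
    · exact measureReal_mono (Set.iUnion₂_subset fun _ _ => Set.inter_subset_right) (hfin _ le_rfl)
    · have main : ∀ k l, k < l → l < n → Disjoint ((⇑S.T)^[k] ⁻¹' S.J N j ∩ E)
          ((⇑S.T)^[l] ⁻¹' S.J N j ∩ E) := by
        intro k l hkl hl
        rw [Set.disjoint_left]
        rintro x ⟨hx1, _⟩ ⟨hx2, _⟩
        obtain ⟨m, rfl⟩ := Nat.exists_eq_add_of_lt hkl
        refine S.no_return hexp N j (m + 1) (by omega) (by omega) _ hx1 ?_
        rw [← Function.iterate_add_apply, show m + 1 + k = k + m + 1 by ring]; exact hx2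
      intro k hk l hl hkl
      have hk : k < n := by simpa using hk
      have hl : l < n := by simpa using hl
      rcases lt_or_gt_of_ne hkl with h | h
      · exact main k l h hl
      · exact (main l k h hk).symm
    · intro k _; exact ((S.mpTk k).measurable (S.measurableSet_J N j)).inter hE
  simpa using Finset.sum_le_sum this

lemma lower_pair (S : RankOne) (hexp : S.ExpGrowing) (n N : ℕ) (hn : S.h N ≤ 2 * n) (i j : ℕ)
    (hi : i < S.R N) (hij : S.dd N j ≤ S.dd N i) :
    S.w N ≤ S.sm n (S.J N i) (S.J N j) := by
  obtain ⟨k, hk⟩ := Nat.exists_eq_add_of_le hij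
  have h1 := S.two_dd_lt hexp N i
  have h2 : S.P k (S.J N i) (S.J N j) = S.w N := by
    have : (⇑S.T.symm)^[k] ⁻¹' S.J N j = S.J N i := by
      unfold J
      rw [S.pre_lvl N _ k (by have := S.dd_lt N i; omega), hk]
    unfold P
    rw [this, Set.inter_self, S.mureal_eq (S.J_sub N i hi), S.vol_J]
  rw [← h2]
  exact Finset.single_le_sum (f := fun k => S.P k (S.J N i) (S.J N j))
    (fun _ _ => S.P_nonneg _ _ _) (by simp; omega)

lemma lower (S : RankOne) (hexp : S.ExpGrowing) (n N : ℕ) (hn : S.h N ≤ 2 * n) :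
    (S.R N : ℝ) ≤ 2 * S.sm n I01 I01 := by
  have h1 : ∑ i ∈ Finset.range (S.R N), ∑ j ∈ Finset.range (S.R N), S.w N ≤
      ∑ i ∈ Finset.range (S.R N), ∑ j ∈ Finset.range (S.R N),
        (S.sm n (S.J N i) (S.J N j) + S.sm n (S.J N j) (S.J N i)) := by
    refine Finset.sum_le_sum fun i hi => Finset.sum_le_sum fun j hj => ?_
    have hi : i < S.R N := by simpa using hi
    have hj : j < S.R N := by simpa using hj
    have p1 := S.sm_nonneg n (S.J N i) (S.J N j)
    have p2 := S.sm_nonneg n (S.J N j) (S.J N i)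
    rcases le_total (S.dd N j) (S.dd N i) with h | h
    · linarith [S.lower_pair hexp n N hn i j hi h]
    · linarith [S.lower_pair hexp n N hn j i hj h]
  simp only [Finset.sum_add_distrib] at h1
  rw [← S.sm_split n N, Finset.sum_comm (f := fun i j => S.sm n (S.J N j) (S.J N i)),
    ← S.sm_split n N] at h1
  simp only [Finset.sum_const, Finset.card_range, nsmul_eq_mul, R_mul_w, mul_one] at h1
  linarith

lemma exists_stage (S : RankOne) (n : ℕ) (hn : 0 < n) :
    ∃ N, S.h N ≤ 2 * n ∧ 2 * n ≤ S.h (N + 1) := by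
  have hex : ∃ N, 2 * n ≤ S.h N := ⟨2 * n, (S.lt_h _).le⟩
  have hs := Nat.find_spec hex
  rcases hN : Nat.find hex with _ | N
  · rw [hN, S.h0] at hs; omega
  · rw [hN] at hs
    exact ⟨N, (not_le.1 (Nat.find_min hex (m := N) (by omega))).le, hs⟩

lemma upper (S : RankOne) (hexp : S.ExpGrowing) (hbdd : S.BoundedCuts) :
    ∃ C : ℝ, 0 ≤ C ∧ ∀ n, ∀ E, MeasurableSet E → E ⊆ I01 →
      S.sm n E I01 ≤ C * S.sm n I01 I01 * S.μ.real E ∧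
      S.sm n I01 E ≤ C * S.sm n I01 I01 * S.μ.real E := by
  obtain ⟨c, hc⟩ := hbdd
  refine ⟨2 * c, by positivity, fun n E hE hEI => ?_⟩
  rcases Nat.eq_zero_or_pos n with rfl | hn
  · simp [sm]
  obtain ⟨N, h1, h2⟩ := S.exists_stage n hn
  have h3 := S.lower hexp n N h1
  have h4 : (S.R (N + 1) : ℝ) ≤ 2 * c * S.sm n I01 I01 := by
    have : (S.r N : ℝ) ≤ c := by exact_mod_cast hc N
    simp only [R]; push_cast
    calc (S.R N : ℝ) * S.r N ≤ (2 * S.sm n I01 I01) * c := by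
          have := S.sm_nonneg n I01 I01
          gcongr
      _ = _ := by ring
  have h5 : (S.R (N + 1) : ℝ) * S.μ.real E ≤ 2 * c * S.sm n I01 I01 * S.μ.real E :=
    mul_le_mul_of_nonneg_right h4 measureReal_nonneg
  exact ⟨(S.upper_left hexp n _ h2 E hE hEI).trans h5, (S.upper_right hexp n _ h2 E hE hEI).trans h5⟩

lemma sm_tendsto (S : RankOne) (hexp : S.ExpGrowing) :
    Tendsto (fun n => S.sm n I01 I01) atTop atTop := by
  rw [tendsto_atTop]
  intro b
  obtain ⟨N, hN⟩ := exists_nat_gt (2 * b)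
  filter_upwards [eventually_ge_atTop (S.h N)] with n hn
  have h1 := S.lower hexp n N (by omega)
  have h2 : (N : ℝ) ≤ S.R N := by
    exact_mod_cast (Nat.lt_two_pow_self.le.trans (S.two_pow_le_R N))
  linarith

lemma lim_J (S : RankOne) (hexp : S.ExpGrowing) (N i j : ℕ) :
    Tendsto (fun n => (S.sm n I01 I01)⁻¹ * S.sm n (S.J N i) (S.J N j)) atTop
      (nhds (S.w N * S.w N)) := by
  -- `R² * sm(J i, J j)` is within a bounded distance of `sm(I, I)`.
  have hb : ∀ n, |S.w N * S.w N * S.sm n I01 I01 - S.sm n (S.J N i) (S.J N j)| ≤ 4 * S.h N := by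
    intro n
    set c := S.sm n (S.J N i) (S.J N j)
    have hd : ∀ i' j', |S.sm n (S.J N i') (S.J N j') - c| ≤ 4 * S.h N := by
      intro i' j'
      have h1 := S.sm_J n N i' j'
      have h2 := S.sm_J n N i j
      rw [abs_le] at *; constructor <;> linarith [h1.1, h1.2, h2.1, h2.2]
    have h1 : c = S.w N * S.w N *
        ∑ i ∈ Finset.range (S.R N), ∑ j ∈ Finset.range (S.R N), c := by
      simp only [Finset.sum_const, Finset.card_range, nsmul_eq_mul]
      linear_combination (-c * (S.R N * S.w N) - c) * S.R_mul_w N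
    have h2 : (4 * S.h N : ℝ) = S.w N * S.w N *
        ∑ i ∈ Finset.range (S.R N), ∑ j ∈ Finset.range (S.R N), (4 * S.h N : ℝ) := by
      simp only [Finset.sum_const, Finset.card_range, nsmul_eq_mul]
      linear_combination (-(4 * S.h N : ℝ) * (S.R N * S.w N) - (4 * S.h N : ℝ)) * S.R_mul_w N
    rw [S.sm_split n N, h1, h2, ← mul_sub, abs_mul, abs_of_nonneg (mul_self_nonneg (S.w N)),
      ← Finset.sum_sub_distrib]
    refine mul_le_mul_of_nonneg_left ?_ (mul_self_nonneg _)
    refine (Finset.abs_sum_le_sum_abs _ _).trans (Finset.sum_le_sum fun i' _ => ?_)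
    rw [← Finset.sum_sub_distrib]
    exact (Finset.abs_sum_le_sum_abs _ _).trans (Finset.sum_le_sum fun j' _ => hd i' j')
  have ht := S.sm_tendsto hexp
  have h0 : Tendsto (fun n => (S.sm n I01 I01)⁻¹ *
      (S.w N * S.w N * S.sm n I01 I01 - S.sm n (S.J N i) (S.J N j))) atTop (nhds 0) := by
    refine squeeze_zero_norm (a := fun n => (S.sm n I01 I01)⁻¹ * (4 * S.h N)) (fun n => ?_) ?_
    · rw [norm_mul, Real.norm_eq_abs, Real.norm_eq_abs,
        abs_of_nonneg (inv_nonneg.2 (S.sm_nonneg n _ _))]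
      exact mul_le_mul_of_nonneg_left (hb n) (inv_nonneg.2 (S.sm_nonneg n _ _))
    · simpa using (tendsto_inv_atTop_zero.comp ht).mul_const (4 * S.h N : ℝ)
  have h1 := (tendsto_const_nhds (x := S.w N * S.w N)).sub h0
  rw [sub_zero] at h1
  refine h1.congr' ?_
  filter_upwards [ht.eventually_gt_atTop 0] with n hn
  field_simp
  ring

lemma lim_J2 (S : RankOne) (hexp : S.ExpGrowing) (d N i j : ℕ) (hi : i < S.R (N + d))
    (hj : j < S.R N) :
    Tendsto (fun n => (S.sm n I01 I01)⁻¹ * S.sm n (S.J (N + d) i) (S.J N j)) atTop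
      (nhds (S.w N * S.w (N + d))) := by
  induction d generalizing N j with
  | zero => exact S.lim_J hexp N i j
  | succ d ih =>
    have hA := S.mu_le_one (S.J_sub _ i hi)
    have e : N + (d + 1) = N + 1 + d := by ring
    simp only [S.sm_refine _ N j hj _ hA, Finset.mul_sum]
    have h2 := tendsto_finsetSum (Finset.range (S.r N)) fun k hk =>
      ih (N + 1) (j * S.r N + k) (by rwa [← e]) (by
        have hk : k < S.r N := by simpa using hk
        have : (j + 1) * S.r N ≤ S.R N * S.r N := Nat.mul_le_mul_right _ hj
        simp only [R]; linarith)
    rw [← e] at h2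
    convert h2 using 2
    have hr : (S.r N : ℝ) ≠ 0 := by exact_mod_cast (S.r_pos N).ne'
    simp only [Finset.sum_const, Finset.card_range, nsmul_eq_mul, S.wrec N]
    field_simp

end RankOne
namespace RankOne

lemma conv_approx (ν : ℕ → Measure ℝ) (c C : ℝ) (hC : 0 ≤ C) (hfin : ∀ n, IsFiniteMeasure (ν n))
    (hb : ∀ n E, MeasurableSet E → (ν n).real E ≤ C * volume.real (E ∩ I01))
    (E : Set ℝ) (hE : MeasurableSet E)
    (H : ∀ ε > 0, ∃ K ⊆ E, MeasurableSet K ∧ volume.real (E ∩ I01) - volume.real (K ∩ I01) ≤ ε ∧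
      Tendsto (fun n => (ν n).real K) atTop (nhds (c * volume.real (K ∩ I01)))) :
    Tendsto (fun n => (ν n).real E) atTop (nhds (c * volume.real (E ∩ I01))) := by
  rw [Metric.tendsto_atTop]
  intro δ hδ
  have hpos : 0 < 2 * (C + |c| + 1) := by positivity
  obtain ⟨K, hKE, hK, hv, hK2⟩ := H (δ / (2 * (C + |c| + 1))) (by positivity)
  obtain ⟨n0, hn0⟩ := Metric.tendsto_atTop.1 hK2 (δ / 2) (by positivity)
  refine ⟨n0, fun n hn => ?_⟩
  have h1 := hn0 n hn
  rw [Real.dist_eq] at h1 ⊢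
  have hvd : volume.real ((E \ K) ∩ I01) = volume.real (E ∩ I01) - volume.real (K ∩ I01) := by
    rw [← measureReal_sdiff (μ := volume) (Set.inter_subset_inter_left _ hKE)
      (hK.inter measurableSet_I)
      (ne_top_of_le_ne_top (b := volume I01) (by simp [vol_I]) (measure_mono Set.inter_subset_right))]
    congr 1
    ext x; simp only [Set.mem_inter_iff, Set.mem_sdiff]; tauto
  have h2 : (ν n).real (E \ K) = (ν n).real E - (ν n).real K :=
    measureReal_sdiff hKE hK
  have h3 := hb n (E \ K) (MeasurableSet.diff hE hK)
  have h4 : 0 ≤ (ν n).real (E \ K) := measureReal_nonneg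
  have h5 : 0 ≤ volume.real ((E \ K) ∩ I01) := measureReal_nonneg
  set v := volume.real ((E \ K) ∩ I01) with hvdef
  rw [← hvd] at hv
  have h6 : (C + |c|) * v < δ / 2 := by
    calc (C + |c|) * v ≤ (C + |c|) * (δ / (2 * (C + |c| + 1))) := by gcongr
      _ < (C + |c| + 1) * (δ / (2 * (C + |c| + 1))) := by
        apply mul_lt_mul_of_pos_right (by linarith); positivity
      _ = δ / 2 := by field_simp
  have h7 : |c * v| ≤ |c| * v := by rw [abs_mul, abs_of_nonneg h5]
  have h8 : volume.real (E ∩ I01) = v + volume.real (K ∩ I01) := by linarith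
  rw [h8, mul_add]
  rw [abs_lt] at h1 ⊢
  rw [abs_le] at h7
  constructor <;> nlinarith [h1.1, h1.2, h7.1, h7.2]

lemma conv (S : RankOne) (ν : ℕ → Measure ℝ) (c C : ℝ) (hC : 0 ≤ C)
    (hfin : ∀ n, IsFiniteMeasure (ν n))
    (hb : ∀ n E, MeasurableSet E → (ν n).real E ≤ C * volume.real (E ∩ I01)) (N0 : ℕ)
    (hJ : ∀ N ≥ N0, ∀ i < S.R N, Tendsto (fun n => (ν n).real (S.J N i)) atTop
      (nhds (c * S.w N)))
    (E : Set ℝ) (hE : MeasurableSet E) :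
    Tendsto (fun n => (ν n).real E) atTop (nhds (c * volume.real (E ∩ I01))) := by
  have hfinI : ∀ A : Set ℝ, volume (A ∩ I01) ≠ ⊤ := fun A =>
    ne_top_of_le_ne_top (by simp [vol_I]) (measure_mono Set.inter_subset_right)
  have base : ∀ E, MeasurableSet E → (∀ N, ∃ p ≤ S.R N, (∀ i < p, S.J N i ⊆ E) ∧
      E ∩ I01 ⊆ Set.Ioo 0 ((p + 1) * S.w N)) →
      Tendsto (fun n => (ν n).real E) atTop (nhds (c * volume.real (E ∩ I01))) := by
    intro E hE H
    refine conv_approx ν c C hC hfin hb E hE fun ε hε => ?_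
    obtain ⟨N1, hN1⟩ := exists_nat_gt (1 / ε)
    set N := max N0 N1
    have hwε : S.w N ≤ ε := by
      rw [S.w_eq, div_le_iff₀ (by exact_mod_cast S.R_pos N)]
      have h1 : (N1 : ℝ) ≤ S.R N := by
        have : N1 ≤ S.R N := (le_max_right N0 N1).trans
          (Nat.lt_two_pow_self.le.trans (S.two_pow_le_R N))
        exact_mod_cast this
      rw [div_lt_iff₀ hε] at hN1
      nlinarith
    obtain ⟨p, hp, hpE, hEp⟩ := H N
    have hmeas : MeasurableSet (⋃ i ∈ Finset.range p, S.J N i) :=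
      Finset.measurableSet_biUnion _ fun i _ => S.measurableSet_J N i
    have hsubI : (⋃ i ∈ Finset.range p, S.J N i) ⊆ I01 :=
      Set.iUnion₂_subset fun i hi => S.J_sub N i (by have := Finset.mem_range.1 hi; omega)
    refine ⟨⋃ i ∈ Finset.range p, S.J N i,
      Set.iUnion₂_subset fun i hi => hpE i (by simpa using hi), hmeas, ?_, ?_⟩
    · rw [Set.inter_eq_left.2 hsubI, S.vol_iUnion_J N p hp]
      have hw := S.w_pos N
      have h1 : volume.real (E ∩ I01) ≤ (p + 1) * S.w N := by
        refine (measureReal_mono hEp (by simp)).trans ?_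
        rw [Real.volume_real_Ioo_of_le (by positivity)]; simp
      linarith
    · rw [Set.inter_eq_left.2 hsubI, S.vol_iUnion_J N p hp]
      have : ∀ n, (ν n).real (⋃ i ∈ Finset.range p, S.J N i) =
          ∑ i ∈ Finset.range p, (ν n).real (S.J N i) := by
        intro n
        rw [measureReal_biUnion_finset]
        · intro i hi j hj hij
          have hi : i < p := by simpa using hi
          have hj : j < p := by simpa using hj
          exact S.J_disj N i j (by omega) (by omega) hij
        · intro i _; exact S.measurableSet_J N i
      simp only [this]
      have h2 := tendsto_finsetSum (Finset.range p) fun i hi =>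
        hJ N (le_max_left _ _) i (by have := Finset.mem_range.1 hi; omega)
      convert h2 using 2
      simp; ring
  have huniv := base Set.univ MeasurableSet.univ fun N => ⟨S.R N, le_rfl, fun i _ => Set.subset_univ _, by
    intro x hx
    have h1 := S.R_mul_w N
    have h2 := S.w_pos N
    refine ⟨hx.2.1, hx.2.2.trans_le ?_⟩
    rw [add_mul, h1]; linarith⟩
  induction E, hE using MeasurableSpace.induction_on_inter
    (h_eq := (BorelSpace.measurable_eq (α := ℝ)).trans (borel_eq_generateFrom_Iio ℝ))
    (h_inter := isPiSystem_Iio) with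
  | empty => simp
  | basic u hu =>
    obtain ⟨t, rfl⟩ := hu
    refine base _ measurableSet_Iio fun N => ⟨min ⌊t * S.R N⌋₊ (S.R N), min_le_right _ _, ?_, ?_⟩
    · intro i hi x hx
      have hi1 : i < ⌊t * S.R N⌋₊ := lt_of_lt_of_le hi (min_le_left _ _)
      have hi2 : i < S.R N := lt_of_lt_of_le hi (min_le_right _ _)
      rw [S.J_eq N i hi2] at hx
      have h1 : ((i + 1 : ℕ) : ℝ) ≤ t * S.R N := (Nat.le_floor_iff' (by omega)).1 hi1
      push_cast at h1
      refine hx.2.trans_le ?_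
      calc ((i : ℝ) + 1) * S.w N ≤ (t * S.R N) * S.w N :=
            mul_le_mul_of_nonneg_right h1 (S.w_pos N).le
        _ = t := by rw [mul_assoc, S.R_mul_w, mul_one]
    · intro x hx
      refine ⟨hx.2.1, ?_⟩
      have hw := S.w_pos N
      have h1 := S.R_mul_w N
      rcases min_choice ⌊t * S.R N⌋₊ (S.R N) with h | h
      · rw [h]
        have h2 := (Nat.lt_floor_add_one (t * S.R N)).le
        refine lt_of_lt_of_le (b := t) hx.1 ?_
        calc t = (t * S.R N) * S.w N := by rw [mul_assoc, h1, mul_one]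
          _ ≤ _ := mul_le_mul_of_nonneg_right h2 hw.le
      · rw [h]
        refine hx.2.2.trans_le ?_
        rw [add_mul, h1]; linarith
  | compl E hE ih =>
    have h1 : volume.real (Eᶜ ∩ I01) = volume.real (Set.univ ∩ I01) - volume.real (E ∩ I01) := by
      rw [← measureReal_sdiff (μ := volume) (Set.inter_subset_inter_left _ (Set.subset_univ E))
        (hE.inter measurableSet_I) (hfinI _)]
      congr 1
      ext x; simp only [Set.mem_inter_iff, Set.mem_sdiff, Set.mem_compl_iff]; tauto
    rw [h1, mul_sub]
    simp only [measureReal_compl hE]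
    exact huniv.sub ih
  | iUnion A hd hA ih =>
    have hs : ∀ (m : Measure ℝ) (B : ℕ → Set ℝ), Pairwise (Function.onFun Disjoint B) →
        (∀ i, MeasurableSet (B i)) → m (⋃ i, B i) ≠ ⊤ →
        HasSum (fun i => m.real (B i)) (m.real (⋃ i, B i)) := by
      intro m B hBd hB hBf
      have := measure_iUnion hBd hB (μ := m)
      rw [Measure.real, this, ENNReal.tsum_toReal_eq fun i =>
        ne_top_of_le_ne_top hBf (measure_mono (Set.subset_iUnion B i))]
      exact ENNReal.hasSum_toReal (this ▸ hBf)
    have hv := hs volume (fun i => A i ∩ I01) (fun i j hij => (hd hij).mono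
      Set.inter_subset_left Set.inter_subset_left) (fun i => (hA i).inter measurableSet_I)
      (by rw [← Set.iUnion_inter]; exact hfinI _)
    have hν : ∀ n, (ν n).real (⋃ i, A i) = ∑' i, (ν n).real (A i) := fun n =>
      (hs (ν n) A hd hA (measure_ne_top _ _)).tsum_eq.symm
    rw [Set.iUnion_inter, ← hv.tsum_eq, ← tsum_mul_left]
    simp only [hν]
    refine tendsto_tsum_of_dominated_convergence (bound := fun i => C * volume.real (A i ∩ I01))
      (hv.summable.mul_left C) ih (Eventually.of_forall fun n i => ?_)
    rw [Real.norm_of_nonneg measureReal_nonneg]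
    exact hb n _ (hA i)

lemma sm_mono (S : RankOne) (n : ℕ) {A A' B B' : Set ℝ} (hA : A ⊆ A') (hB : B ⊆ B')
    (hA1 : S.μ A' ≤ 1) : S.sm n A B ≤ S.sm n A' B' :=
  Finset.sum_le_sum fun k _ => measureReal_mono
    (Set.inter_subset_inter hA (Set.preimage_mono hB))
    (ne_top_of_le_ne_top ENNReal.one_ne_top ((measure_mono Set.inter_subset_left).trans hA1))

/-- A finite combination of measures. -/
lemma real_comb (x : ℝ) (hx : 0 ≤ x) (n : ℕ) (m : ℕ → Measure ℝ) (hm : ∀ k, IsFiniteMeasure (m k)) :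
    IsFiniteMeasure (ENNReal.ofReal x • ∑ k ∈ Finset.range n, m k) ∧
    ∀ E, (ENNReal.ofReal x • ∑ k ∈ Finset.range n, m k).real E =
      x * ∑ k ∈ Finset.range n, (m k).real E := by
  constructor
  · constructor
    rw [Measure.smul_apply, Measure.finsetSum_apply, smul_eq_mul]
    exact ENNReal.mul_lt_top ENNReal.ofReal_lt_top
      (ENNReal.sum_lt_top.2 fun k _ => measure_lt_top _ _)
  · intro E
    rw [Measure.real, Measure.smul_apply, Measure.finsetSum_apply, smul_eq_mul, ENNReal.toReal_mul,
      ENNReal.toReal_ofReal hx, ENNReal.toReal_sum fun k _ => measure_ne_top _ _]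
    rfl

lemma conv_left (S : RankOne) (hexp : S.ExpGrowing) (hbdd : S.BoundedCuts)
    (B : Set ℝ) (hBI : B ⊆ I01) (c : ℝ) (N0 : ℕ)
    (hJ : ∀ N ≥ N0, ∀ i < S.R N, Tendsto (fun n => (S.sm n I01 I01)⁻¹ * S.sm n (S.J N i) B) atTop
      (nhds (c * S.w N)))
    (A : Set ℝ) (hA : MeasurableSet A) (hAI : A ⊆ I01) :
    Tendsto (fun n => (S.sm n I01 I01)⁻¹ * S.sm n A B) atTop (nhds (c * volume.real A)) := by
  obtain ⟨C, hC, hup⟩ := S.upper hexp hbdd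
  have hm : ∀ k, IsFiniteMeasure ((S.μ.restrict ((⇑S.T.symm)^[k] ⁻¹' B)).restrict I01) := by
    intro k
    constructor
    rw [Measure.restrict_apply_univ]
    exact lt_of_le_of_lt ((Measure.restrict_apply_le _ _).trans (S.mu_le_one le_rfl))
      ENNReal.one_lt_top
  have hinv : ∀ n, 0 ≤ (S.sm n I01 I01)⁻¹ := fun n => inv_nonneg.2 (S.sm_nonneg n _ _)
  have key : ∀ n E, MeasurableSet E → (ENNReal.ofReal (S.sm n I01 I01)⁻¹ • ∑ k ∈ Finset.range n,
      ((S.μ.restrict ((⇑S.T.symm)^[k] ⁻¹' B)).restrict I01)).real E =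
      (S.sm n I01 I01)⁻¹ * S.sm n (E ∩ I01) B := by
    intro n E hE
    rw [(real_comb _ (hinv n) n _ hm).2]
    congr 1
    refine Finset.sum_congr rfl fun k _ => ?_
    rw [measureReal_restrict_apply hE, measureReal_restrict_apply (hE.inter measurableSet_I)]
    rfl
  have main := S.conv (fun n => ENNReal.ofReal (S.sm n I01 I01)⁻¹ • ∑ k ∈ Finset.range n,
      ((S.μ.restrict ((⇑S.T.symm)^[k] ⁻¹' B)).restrict I01)) c C hC
    (fun n => (real_comb _ (hinv n) n _ hm).1) (fun n E hE => ?_) N0 (fun N hN i hi => ?_) A hA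
  · simp only [key _ A hA, Set.inter_eq_left.2 hAI] at main
    exact main
  · rw [key n E hE]
    have h1 := (S.sm_mono n (le_refl (E ∩ I01)) hBI (S.mu_le_one Set.inter_subset_right)).trans
      (hup n _ (hE.inter measurableSet_I) Set.inter_subset_right).1
    rw [S.mureal_eq Set.inter_subset_right] at h1
    rcases (S.sm_nonneg n I01 I01).eq_or_lt with h0 | h0
    · rw [← h0]; simp; positivity
    · rw [inv_mul_le_iff₀ h0]; linarith
  · simp only [key _ _ (S.measurableSet_J N i), Set.inter_eq_left.2 (S.J_sub N i hi)]
    exact hJ N hN i hi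

lemma conv_right (S : RankOne) (hexp : S.ExpGrowing) (hbdd : S.BoundedCuts)
    (A : Set ℝ) (hAI : A ⊆ I01) (c : ℝ) (N0 : ℕ)
    (hJ : ∀ N ≥ N0, ∀ i < S.R N, Tendsto (fun n => (S.sm n I01 I01)⁻¹ * S.sm n A (S.J N i)) atTop
      (nhds (c * S.w N)))
    (B : Set ℝ) (hB : MeasurableSet B) (hBI : B ⊆ I01) :
    Tendsto (fun n => (S.sm n I01 I01)⁻¹ * S.sm n A B) atTop (nhds (c * volume.real B)) := by
  obtain ⟨C, hC, hup⟩ := S.upper hexp hbdd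
  have hA1 := S.mu_le_one hAI
  have hm0 : IsFiniteMeasure (S.μ.restrict A) := by
    constructor
    rw [Measure.restrict_apply_univ]
    exact lt_of_le_of_lt hA1 ENNReal.one_lt_top
  have hm : ∀ k, IsFiniteMeasure (((S.μ.restrict A).map ((⇑S.T.symm)^[k])).restrict I01) := by
    intro k
    infer_instance
  have hinv : ∀ n, 0 ≤ (S.sm n I01 I01)⁻¹ := fun n => inv_nonneg.2 (S.sm_nonneg n _ _)
  have key : ∀ n E, MeasurableSet E → (ENNReal.ofReal (S.sm n I01 I01)⁻¹ • ∑ k ∈ Finset.range n,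
      (((S.μ.restrict A).map ((⇑S.T.symm)^[k])).restrict I01)).real E =
      (S.sm n I01 I01)⁻¹ * S.sm n A (E ∩ I01) := by
    intro n E hE
    rw [(real_comb _ (hinv n) n _ hm).2]
    congr 1
    refine Finset.sum_congr rfl fun k _ => ?_
    have hEI := hE.inter measurableSet_I
    rw [measureReal_restrict_apply hE, map_measureReal_apply (S.mpk k).measurable hEI,
      measureReal_restrict_apply ((S.mpk k).measurable hEI), Set.inter_comm]
    rfl
  have main := S.conv (fun n => ENNReal.ofReal (S.sm n I01 I01)⁻¹ • ∑ k ∈ Finset.range n,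
      (((S.μ.restrict A).map ((⇑S.T.symm)^[k])).restrict I01)) c C hC
    (fun n => (real_comb _ (hinv n) n _ hm).1) (fun n E hE => ?_) N0 (fun N hN i hi => ?_) B hB
  · simp only [key _ B hB, Set.inter_eq_left.2 hBI] at main
    exact main
  · rw [key n E hE]
    have h1 := (S.sm_mono n hAI (le_refl (E ∩ I01)) (S.mu_le_one le_rfl)).trans
      (hup n _ (hE.inter measurableSet_I) Set.inter_subset_right).2
    rw [S.mureal_eq Set.inter_subset_right] at h1
    rcases (S.sm_nonneg n I01 I01).eq_or_lt with h0 | h0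
    · rw [← h0]; simp; positivity
    · rw [inv_mul_le_iff₀ h0]; linarith
  · simp only [key _ _ (S.measurableSet_J N i), Set.inter_eq_left.2 (S.J_sub N i hi)]
    exact hJ N hN i hi

end RankOne

theorem statement2 (S : RankOne) (hexp : S.ExpGrowing) (hbdd : S.BoundedCuts)
    (A B : Set ℝ) (hA : MeasurableSet A) (hAI : A ⊆ S.lvl 0 0)
    (hB : MeasurableSet B) (hBI : B ⊆ S.lvl 0 0) :
    Tendsto (fun n => (S.a (S.lvl 0 0) n)⁻¹ *
        ∑ k ∈ Finset.range n, (S.μ (A ∩ (⇑S.T)^[k] '' B)).toReal)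
      atTop (nhds ((S.μ A).toReal * (S.μ B).toReal)) := by
  have hI := S.lvl00
  have hP : ∀ k (A B : Set ℝ), (S.μ (A ∩ (⇑S.T)^[k] '' B)).toReal = S.P k A B := by
    intro k A B; rw [S.image_eq]; rfl
  have hμI : (S.μ RankOne.I01).toReal = 1 := by
    rw [S.mu_eq le_rfl, RankOne.vol_I]; simp
  have ha : ∀ n, S.a (S.lvl 0 0) n = S.sm n RankOne.I01 RankOne.I01 := by
    intro n
    unfold RankOne.a RankOne.u RankOne.sm
    simp only [hI, hP, hμI, one_pow, div_one]
  rw [hI] at hAI hBI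
  simp only [ha, hP]
  -- First all `J` on the right with the same stage, then all `A`, then all `B`.
  have step2 := S.conv_right hexp hbdd A hAI (volume.real A) 0 (fun N _ j hj => ?_) B hB hBI
  · change Tendsto _ _ (nhds (S.μ.real A * S.μ.real B))
    rw [S.mureal_eq hAI, S.mureal_eq hBI]
    exact step2
  · rw [mul_comm]
    refine S.conv_left hexp hbdd _ (S.J_sub N j hj) (S.w N) N
      (fun N' hN' i hi => ?_) A hA hAI
    obtain ⟨d, rfl⟩ := Nat.exists_eq_add_of_le hN'
    exact S.lim_J2 hexp d N i j hi hj
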